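/- Let w, u ≥ 2, let ρ : Fin w → Fin u → V, and let M : Matrix (Fin w × V) (Fin u × V) 𝔽₂ be the w × u array of DPMs with M (i, a) (j, b) = 1 if a + b = ρ i j and 0 otherwise. Suppose that for all i ≠ i' and j ≠ j' one has ρ i j + ρ i j' + ρ i' j + ρ i' j' ≠ 0 (equivalently, every 2 × 2 sub-array of M has girth 8). Then the girth of the Tanner graph of M is either 6 or 8. -/

import Mathlib

/-- `V ℓ` is the 𝔽₂-vector space `Fin ℓ → ZMod 2` with bitwise-XOR addition. -/
abbrev V (ℓ : ℕ) := Fin ℓ → ZMod 2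

/-- The Tanner graph of a binary matrix `H`: `Sum.inl r` and `Sum.inr c` are adjacent
iff `H r c = 1`, and there are no other adjacencies. -/
def tanner {R C : Type*} (H : Matrix R C (ZMod 2)) : SimpleGraph (R ⊕ C) :=
  SimpleGraph.fromRel fun x y =>
    match x, y with
    | Sum.inl r, Sum.inr c => H r c = 1
    | _, _ => False

open SimpleGraph

theorem tanner_adj_inl_inr {R C : Type*} {H : Matrix R C (ZMod 2)} {r : R} {c : C} :
    (tanner H).Adj (Sum.inl r) (Sum.inr c) ↔ H r c = 1 := by
  simp [tanner]

theorem tanner_adj_inr_inl {R C : Type*} {H : Matrix R C (ZMod 2)} {r : R} {c : C} :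
    (tanner H).Adj (Sum.inr c) (Sum.inl r) ↔ H r c = 1 := by
  simp [tanner]

theorem not_tanner_adj_inl_inl {R C : Type*} {H : Matrix R C (ZMod 2)} {r r' : R} :
    ¬ (tanner H).Adj (Sum.inl r) (Sum.inl r') := by
  simp [tanner]

theorem not_tanner_adj_inr_inr {R C : Type*} {H : Matrix R C (ZMod 2)} {c c' : C} :
    ¬ (tanner H).Adj (Sum.inr c) (Sum.inr c') := by
  simp [tanner]

/-- The Tanner graph is bipartite: rows on one side, columns on the other. -/
def tannerColoring {R C : Type*} (H : Matrix R C (ZMod 2)) : (tanner H).Coloring Bool :=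
  Coloring.mk Sum.isLeft fun {x y} h => by
    rcases x with r | c <;> rcases y with r' | c'
    · exact absurd h not_tanner_adj_inl_inl
    · simp
    · simp
    · exact absurd h not_tanner_adj_inr_inr

theorem even_length_of_closed_tanner_walk {R C : Type*} {H : Matrix R C (ZMod 2)} {x : R ⊕ C}
    (p : (tanner H).Walk x x) : Even p.length :=
  ((tannerColoring H).even_length_iff_congr p).2 Iff.rfl

/-- A cycle of length four yields two distinct vertices with two distinct common neighbours. -/
theorem SimpleGraph.Walk.IsCycle.length_ne_four {α : Type*} {G : SimpleGraph α}
    (hG : ∀ x y z t, G.Adj x y → G.Adj y z → G.Adj z t → G.Adj t x → x = z ∨ y = t)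
    {x : α} {p : G.Walk x x} (hp : p.IsCycle) : p.length ≠ 4 := by
  intro hlen
  match p, hp, hlen with
  | .cons h₁ (.cons h₂ (.cons h₃ (.cons h₄ .nil))), hp, _ =>
    have hnodup := hp.support_nodup
    rcases hG _ _ _ _ h₁ h₂ h₃ h₄ with h | h <;> subst h <;> simp at hnodup

theorem V.two_eq_zero (ℓ : ℕ) : (2 : V ℓ) = 0 := by
  funext k
  exact CharTwo.two_eq_zero

section DPMArray

variable {ℓ w u : ℕ} {ρ : Fin w → Fin u → V ℓ} {M : Matrix (Fin w × V ℓ) (Fin u × V ℓ) (ZMod 2)}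

theorem dpmArray_eq_one_iff
    (hM : ∀ (i : Fin w) (a : V ℓ) (j : Fin u) (b : V ℓ),
      M (i, a) (j, b) = if a + b = ρ i j then 1 else 0)
    (i : Fin w) (a : V ℓ) (j : Fin u) (b : V ℓ) : M (i, a) (j, b) = 1 ↔ a + b = ρ i j := by
  simp [hM]

/-- Two rows of the array have no two distinct common columns. -/
theorem dpmArray_row_eq_or_col_eq
    (hM : ∀ (i : Fin w) (a : V ℓ) (j : Fin u) (b : V ℓ),
      M (i, a) (j, b) = if a + b = ρ i j then 1 else 0)
    (hno4 : ∀ (i i' : Fin w) (j j' : Fin u), i ≠ i' → j ≠ j' →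
      ρ i j + ρ i j' + ρ i' j + ρ i' j' ≠ 0)
    {r r' : Fin w × V ℓ} {c c' : Fin u × V ℓ} (h₁ : M r c = 1) (h₂ : M r' c = 1)
    (h₃ : M r' c' = 1) (h₄ : M r c' = 1) : r = r' ∨ c = c' := by
  obtain ⟨i, a⟩ := r
  obtain ⟨i', a'⟩ := r'
  obtain ⟨j, b⟩ := c
  obtain ⟨j', b'⟩ := c'
  rw [dpmArray_eq_one_iff hM] at h₁ h₂ h₃ h₄
  have h2 := V.two_eq_zero ℓ
  by_cases hi : i = i'
  · subst hi
    exact .inl (Prod.ext rfl (add_right_cancel (h₁.trans h₂.symm)))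
  by_cases hj : j = j'
  · subst hj
    exact .inr (Prod.ext rfl (add_left_cancel (h₁.trans h₄.symm)))
  refine absurd ?_ (hno4 i i' j j' hi hj)
  linear_combination (a + a' + b + b') * h2 - h₁ - h₂ - h₃ - h₄

/-- Going twice around a `2 × 2` sub-array closes up into a cycle of length eight. -/
theorem exists_dpmArray_cycle_length_eight
    (hM : ∀ (i : Fin w) (a : V ℓ) (j : Fin u) (b : V ℓ),
      M (i, a) (j, b) = if a + b = ρ i j then 1 else 0)
    {i i' : Fin w} {j j' : Fin u} (hi : i ≠ i') (hj : j ≠ j')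
    (hs : ρ i j + ρ i j' + ρ i' j + ρ i' j' ≠ 0) :
    ∃ (x : (Fin w × V ℓ) ⊕ (Fin u × V ℓ)) (p : (tanner M).Walk x x),
      p.IsCycle ∧ p.length = 8 := by
  have h2 := V.two_eq_zero ℓ
  obtain ⟨s, hs_eq⟩ : ∃ s, s = ρ i j + ρ i j' + ρ i' j + ρ i' j' := ⟨_, rfl⟩
  rw [← hs_eq] at hs
  have row_col {k : Fin w} {a : V ℓ} {m : Fin u} {b : V ℓ} (h : a + b = ρ k m) :
      (tanner M).Adj (Sum.inl (k, a)) (Sum.inr (m, b)) :=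
    tanner_adj_inl_inr.2 ((dpmArray_eq_one_iff hM k a m b).2 h)
  have h₁ := row_col (show 0 + ρ i j = ρ i j by ring)
  have h₂ := row_col (show (ρ i j + ρ i' j) + ρ i j = ρ i' j by
    linear_combination ρ i j * h2)
  have h₃ := row_col (show (ρ i j + ρ i' j) + (s + ρ i j') = ρ i' j' by
    linear_combination (ρ i j + ρ i' j + ρ i j') * h2 + hs_eq)
  have h₄ := row_col (show s + (s + ρ i j') = ρ i j' by linear_combination s * h2)
  have h₅ := row_col (show s + (s + ρ i j) = ρ i j by linear_combination s * h2)
  have h₆ := row_col (show (s + ρ i j + ρ i' j) + (s + ρ i j) = ρ i' j by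
    linear_combination (s + ρ i j) * h2)
  have h₇ := row_col (show (s + ρ i j + ρ i' j) + ρ i j' = ρ i' j' by
    linear_combination (ρ i j + ρ i' j + ρ i j') * h2 + hs_eq)
  have h₈ := row_col (show 0 + ρ i j' = ρ i j' by ring)
  refine ⟨_, .cons h₁ (.cons h₂.symm (.cons h₃ (.cons h₄.symm (.cons h₅ (.cons h₆.symm
    (.cons h₇ (.cons h₈.symm .nil))))))), ?_, rfl⟩
  rw [Walk.cons_isCycle_iff]
  simp [Walk.cons_isPath_iff, hi, hi.symm, hj, hj.symm, hs, hs.symm, add_assoc]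

end DPMArray

/-- If every `2 × 2` sub-array of a `w × u` array of DPMs has girth `8`
(i.e. `ρ i j + ρ i j' + ρ i' j + ρ i' j' ≠ 0` for `i ≠ i'`, `j ≠ j'`), then the girth of
the Tanner graph of the whole array is `6` or `8`. -/
theorem dpmArray_girth_six_or_eight (ℓ w u : ℕ) (hw : 2 ≤ w) (hu : 2 ≤ u)
    (ρ : Fin w → Fin u → V ℓ)
    (M : Matrix (Fin w × V ℓ) (Fin u × V ℓ) (ZMod 2))
    (hM : ∀ (i : Fin w) (a : V ℓ) (j : Fin u) (b : V ℓ),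
      M (i, a) (j, b) = if a + b = ρ i j then 1 else 0)
    (hno4 : ∀ (i i' : Fin w) (j j' : Fin u), i ≠ i' → j ≠ j' →
      ρ i j + ρ i j' + ρ i' j + ρ i' j' ≠ 0) :
    (tanner M).girth = 6 ∨ (tanner M).girth = 8 := by
  have : Nontrivial (Fin w) := Fin.nontrivial_iff_two_le.2 hw
  have : Nontrivial (Fin u) := Fin.nontrivial_iff_two_le.2 hu
  obtain ⟨i, i', hi⟩ := exists_pair_ne (Fin w)
  obtain ⟨j, j', hj⟩ := exists_pair_ne (Fin u)
  obtain ⟨x, p, hp, hlen⟩ :=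
    exists_dpmArray_cycle_length_eight hM hi hj (hno4 i i' j j' hi hj)
  have hle : (tanner M).girth ≤ 8 := hlen ▸ girth_le_length hp
  have hcyclic : ¬ (tanner M).IsAcyclic := fun h => h p hp
  have hge := three_le_girth hcyclic
  obtain ⟨y, q, hq, hqlen⟩ := exists_girth_eq_length.2 hcyclic
  have heven : Even (tanner M).girth := hqlen ▸ even_length_of_closed_tanner_walk q
  have hne : (tanner M).girth ≠ 4 := hqlen ▸ hq.length_ne_four (by
    rintro (a | a) (b | b) (c | c) (d | d) h₁ h₂ h₃ h₄ <;>
      simp only [tanner_adj_inl_inr, tanner_adj_inr_inl, not_tanner_adj_inl_inl,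
        not_tanner_adj_inr_inr] at h₁ h₂ h₃ h₄
    · exact (dpmArray_row_eq_or_col_eq hM hno4 h₁ h₂ h₃ h₄).imp
        (congrArg Sum.inl) (congrArg Sum.inr)
    · exact (dpmArray_row_eq_or_col_eq hM hno4 h₁ h₄ h₃ h₂).symm.imp
        (congrArg Sum.inr) (congrArg Sum.inl))
  obtain ⟨k, hk⟩ := heven
  omega
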